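/- arXiv:2306.01909 — 3 statements merged into one kernel-verified Lean document; each statement's English description precedes it below -/
import Mathlib

section
/- Let X be a nonempty compact Hausdorff topological space and A a unital C*-algebra over ℂ, and let C(X, A) denote the unital C*-algebra of continuous functions from X to A with pointwise operations and supremum norm. Then every pure state ω on C(X, A) is a product state: there exist a point x ∈ X and a pure state φ on A such that ω(f) = φ(f(x)) for all f ∈ C(X, A). -/
/-- A state on a unital complex C*-algebra (or more generally a unital complex
star algebra): a `ℂ`-linear functional sending `1` to `1` and taking
nonnegative real values on elements of the form `star a * a`. -/
def IsState {A : Type*} [Ring A] [StarRing A] [Algebra ℂ A]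
    (φ : A →ₗ[ℂ] ℂ) : Prop :=
  φ 1 = 1 ∧ ∀ a : A, 0 ≤ (φ (star a * a)).re ∧ (φ (star a * a)).im = 0

namespace PureProd

variable {X : Type*} [TopologicalSpace X] {A : Type*} [CStarAlgebra A]

/-- pointwise product of a real function and an algebra-valued function -/
noncomputable def m (g : C(X, ℝ)) (f : C(X, A)) : C(X, A) :=
  ⟨fun x => (g x : ℝ) • f x, by fun_prop⟩

@[simp] lemma m_apply (g : C(X, ℝ)) (f : C(X, A)) (x : X) : m g f x = g x • f x := rfl

/-- the multiplied functional -/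
noncomputable def mul (g : C(X, ℝ)) (ω : C(X, A) →ₗ[ℂ] ℂ) : C(X, A) →ₗ[ℂ] ℂ where
  toFun f := ω (m g f)
  map_add' f h := by
    rw [← map_add]; congr 1; ext x; simp
  map_smul' c f := by
    rw [RingHom.id_apply, ← map_smul]; congr 1; ext x; exact smul_comm (g x) c (f x)

@[simp] lemma mul_apply (g : C(X, ℝ)) (ω : C(X, A) →ₗ[ℂ] ℂ) (f : C(X, A)) :
    mul g ω f = ω (m g f) := rfl

lemma pos (ω : C(X, A) →ₗ[ℂ] ℂ) (hω : IsState ω) (g : C(X, ℝ)) (hg : ∀ x, 0 ≤ g x)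
    (a : C(X, A)) :
    0 ≤ (ω (m g (star a * a))).re ∧ (ω (m g (star a * a))).im = 0 := by
  have h := hω.2 (m ⟨fun x => Real.sqrt (g x), by fun_prop⟩ a)
  have e : m g (star a * a) = star (m ⟨fun x => Real.sqrt (g x), by fun_prop⟩ a) *
      (m ⟨fun x => Real.sqrt (g x), by fun_prop⟩ a) := by
    ext x
    simp [smul_smul, Real.mul_self_sqrt (hg x)]
  rwa [e]

lemma pos_one (ω : C(X, A) →ₗ[ℂ] ℂ) (hω : IsState ω) (g : C(X, ℝ)) (hg : ∀ x, 0 ≤ g x) :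
    0 ≤ (ω (m g 1)).re ∧ (ω (m g 1)).im = 0 := by
  have e : star (1 : C(X, A)) * 1 = 1 := by ext x; simp
  have := pos ω hω g hg 1
  rwa [e] at this

lemma m_add (g h : C(X, ℝ)) (f : C(X, A)) : m (g + h) f = m g f + m h f := by
  ext x; simp [add_smul]

lemma m_sub (g h : C(X, ℝ)) (f : C(X, A)) : m (g - h) f = m g f - m h f := by
  ext x; simp [sub_smul]

lemma m_smul (c : ℝ) (g : C(X, ℝ)) (f : C(X, A)) : m (c • g) f = (c : ℂ) • m g f := by
  ext x; simp [mul_smul]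

lemma m_const (c : ℝ) (f : C(X, A)) : m (.const X c) f = (c : ℂ) • f := by
  ext x; simp

lemma m_one (f : C(X, A)) : m 1 f = f := by
  ext x; simp

lemma m_m (g h : C(X, ℝ)) (f : C(X, A)) : m (g * h) f = m g (m h f) := by
  ext x; simp [mul_smul]

lemma state_scale (ω : C(X, A) →ₗ[ℂ] ℂ) (hω : IsState ω) (g : C(X, ℝ)) (hg : ∀ x, 0 ≤ g x)
    (t : ℝ) (ht : 0 < t) (h1 : ω (m g 1) = t) : IsState ((t⁻¹ : ℝ) • mul g ω) := by
  refine ⟨?_, fun a => ?_⟩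
  · simp only [LinearMap.smul_apply, mul_apply, h1, Complex.real_smul]
    rw [← Complex.ofReal_mul, inv_mul_cancel₀ ht.ne', Complex.ofReal_one]
  · have := pos ω hω g hg a
    simp only [LinearMap.smul_apply, mul_apply, Complex.smul_re, Complex.smul_im, this.2,
      smul_eq_mul]
    exact ⟨mul_nonneg (inv_nonneg.2 ht.le) this.1, mul_zero _⟩

lemma key0 (ω : C(X, A) →ₗ[ℂ] ℂ)
    (hω : ω ∈ Set.extremePoints ℝ {φ : C(X, A) →ₗ[ℂ] ℂ | IsState φ})
    (g : C(X, ℝ)) (hg : ∀ x, 1/4 ≤ g x) (hg' : ∀ x, g x ≤ 3/4) (f : C(X, A)) :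
    ω (m g f) = ω (m g 1) * ω f := by
  have hs : IsState ω := hω.1
  obtain ⟨t, ht⟩ : ∃ t : ℝ, ω (m g 1) = t :=
    ⟨(ω (m g 1)).re, Complex.ext rfl (pos_one ω hs g (fun x => by linarith [hg x])).2⟩
  have ht0 : 0 < t := by
    have := (pos_one ω hs (g - .const X (1/4)) (fun x => by simpa using hg x)).1
    rw [m_sub, m_const, map_sub, map_smul, hs.1, ht] at this
    simp at this
    linarith
  have h1t : ω (m (1 - g) 1) = ((1 - t : ℝ) : ℂ) := by
    rw [m_sub, m_one, map_sub, hs.1, ht]; push_cast; rfl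
  have ht1 : 0 < 1 - t := by
    have := (pos_one ω hs (.const X (3/4) - g) (fun x => by simpa using hg' x)).1
    rw [m_sub, m_const, map_sub, map_smul, hs.1, ht] at this
    simp at this
    linarith
  have s1 := state_scale ω hs g (fun x => by linarith [hg x]) t ht0 ht
  have s2 := state_scale ω hs (1 - g) (fun x => by simp; linarith [hg' x]) (1 - t) ht1 h1t
  have := hω.2 s1 s2 ⟨t, 1 - t, ht0, ht1, by ring, by
    rw [smul_smul, smul_smul, mul_inv_cancel₀ ht0.ne', mul_inv_cancel₀ ht1.ne', one_smul, one_smul]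
    ext f
    simp only [LinearMap.add_apply, mul_apply]
    rw [← map_add, ← m_add]
    simp [m_one]⟩
  have h := LinearMap.congr_fun this f
  simp only [LinearMap.smul_apply, mul_apply, Complex.real_smul] at h
  rw [ht, ← h, ← mul_assoc, ← Complex.ofReal_mul, mul_inv_cancel₀ ht0.ne']
  simp

lemma key [CompactSpace X] (ω : C(X, A) →ₗ[ℂ] ℂ)
    (hω : ω ∈ Set.extremePoints ℝ {φ : C(X, A) →ₗ[ℂ] ℂ | IsState φ})
    (g : C(X, ℝ)) (f : C(X, A)) :
    ω (m g f) = ω (m g 1) * ω f := by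
  have hs : IsState ω := hω.1
  set M : ℝ := ‖g‖ + 1
  have hM : 0 < M := by positivity
  have hb : ∀ x, |(4 * M)⁻¹ * g x| ≤ 1/4 := fun x => by
    have h1 : |g x| ≤ M := by
      have := g.norm_coe_le_norm x
      rw [Real.norm_eq_abs] at this
      linarith
    rw [abs_mul, abs_of_pos (by positivity), inv_mul_le_iff₀ (by positivity)]
    linarith
  have h := key0 ω hω (.const X (1/2) + (4 * M)⁻¹ • g)
    (fun x => by have := abs_le.1 (hb x); simp only [ContinuousMap.add_apply, ContinuousMap.const_apply, ContinuousMap.smul_apply, smul_eq_mul]; linarith)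
    (fun x => by have := abs_le.1 (hb x); simp only [ContinuousMap.add_apply, ContinuousMap.const_apply, ContinuousMap.smul_apply, smul_eq_mul]; linarith) f
  simp only [m_add, m_smul, m_const, map_add, map_smul, hs.1, smul_eq_mul] at h
  have hc : (((4 * M)⁻¹ : ℝ) : ℂ) ≠ 0 := by
    exact_mod_cast (by positivity : (4 * M)⁻¹ ≠ 0)
  apply mul_left_cancel₀ hc
  linear_combination h

lemma real_one [CompactSpace X] (ω : C(X, A) →ₗ[ℂ] ℂ) (hs : IsState ω) (g : C(X, ℝ)) :
    (ω (m g 1)).im = 0 := by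
  have h := (pos_one ω hs (.const X ‖g‖ + g) (fun x => by
    have := abs_le.1 (g.norm_coe_le_norm x)
    simp only [ContinuousMap.add_apply, ContinuousMap.const_apply]; linarith)).2
  rw [m_add, m_const, map_add, map_smul, hs.1] at h
  simpa using h

lemma exists_pt [CompactSpace X] [T2Space X] (ω : C(X, A) →ₗ[ℂ] ℂ)
    (hω : ω ∈ Set.extremePoints ℝ {φ : C(X, A) →ₗ[ℂ] ℂ | IsState φ}) :
    ∃ x : X, ∀ g : C(X, ℝ), ω (m g 1) = (g x : ℝ) := by
  have hs : IsState ω := hω.1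
  let τ : C(X, ℝ) →ₐ[ℝ] ℝ := AlgHom.ofLinearMap
    { toFun := fun g => (ω (m g 1)).re
      map_add' := fun g h => by rw [m_add, map_add, Complex.add_re]
      map_smul' := fun c g => by rw [m_smul, map_smul]; simp }
    (by simp [m_one, hs.1])
    (fun g h => by
      simp only [LinearMap.coe_mk, AddHom.coe_mk]
      rw [m_m, key ω hω, Complex.mul_re, real_one ω hs]; simp)
  obtain ⟨x, hx⟩ := (WeakDual.CharacterSpace.continuousMapEval_bijective (X := X) (𝕜 := ℝ)).2
    (WeakDual.CharacterSpace.equivAlgHom.symm τ)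
  refine ⟨x, fun g => Complex.ext ?_ ?_⟩
  · have := DFunLike.congr_fun hx g
    simpa [τ] using this.symm
  · simpa using real_one ω hs g

lemma vanish [CompactSpace X] (ω : C(X, A) →ₗ[ℂ] ℂ)
    (hω : ω ∈ Set.extremePoints ℝ {φ : C(X, A) →ₗ[ℂ] ℂ | IsState φ}) (x : X)
    (hx : ∀ g : C(X, ℝ), ω (m g 1) = (g x : ℝ)) (f : C(X, A)) (hf : f x = 0) : ω f = 0 := by
  let g : C(X, ℝ) := ⟨fun y => Real.sqrt ‖f y‖, by fun_prop⟩
  have hn : ∀ y, ‖(g y)⁻¹ • f y‖ = g y := fun y => by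
    have h0 : 0 ≤ g y := Real.sqrt_nonneg _
    have h1 : g y * g y = ‖f y‖ := Real.mul_self_sqrt (norm_nonneg _)
    rw [norm_smul, norm_inv, Real.norm_of_nonneg h0, ← h1]
    by_cases h : g y = 0
    · simp [h]
    · field_simp
  have hz : ∀ y, g y = 0 → f y = 0 := fun y h => by
    have h1 : g y * g y = ‖f y‖ := Real.mul_self_sqrt (norm_nonneg _)
    rw [← norm_eq_zero, ← h1, h, mul_zero]
  let k : C(X, A) := ⟨fun y => (g y)⁻¹ • f y, by
    rw [continuous_iff_continuousAt]
    intro y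
    by_cases h : g y = 0
    · unfold ContinuousAt
      beta_reduce
      rw [h, inv_zero, zero_smul, tendsto_zero_iff_norm_tendsto_zero]
      simp only [hn]
      simpa [h] using g.continuous.tendsto y
    · exact (g.continuous.continuousAt.inv₀ h).smul f.continuous.continuousAt⟩
  have e : f = m g k := by
    ext y
    change f y = g y • (g y)⁻¹ • f y
    by_cases h : g y = 0
    · simp [hz y h]
    · rw [smul_smul, mul_inv_cancel₀ h, one_smul]
  rw [e, key ω hω, hx]
  simp [g, hf]

/-- composition with evaluation -/
noncomputable def comp (x : X) (φ : A →ₗ[ℂ] ℂ) : C(X, A) →ₗ[ℂ] ℂ where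
  toFun f := φ (f x)
  map_add' f g := by simp
  map_smul' c f := by simp

lemma comp_state (x : X) (φ : A →ₗ[ℂ] ℂ) (h : IsState φ) :
    IsState (comp x φ) :=
  ⟨by simpa [comp] using h.1, fun a => by simpa [comp] using h.2 (a x)⟩

end PureProd

open PureProd in
/-- Takesaki's structure theorem for a commutative first factor: every pure
state (extreme point of the state space) of `C(X, A)` is a product state
`f ↦ φ (f x)` for some point `x ∈ X` and some pure state `φ` of `A`. -/
theorem pure_state_of_continuousMap_is_product
    (X : Type*) [TopologicalSpace X] [CompactSpace X] [T2Space X] [Nonempty X]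
    (A : Type*) [CStarAlgebra A]
    (ω : C(X, A) →ₗ[ℂ] ℂ)
    (hω : ω ∈ Set.extremePoints ℝ {φ : C(X, A) →ₗ[ℂ] ℂ | IsState φ}) :
    ∃ (x : X) (φ : A →ₗ[ℂ] ℂ),
      φ ∈ Set.extremePoints ℝ {ψ : A →ₗ[ℂ] ℂ | IsState ψ} ∧
      ∀ f : C(X, A), ω f = φ (f x) := by
  obtain ⟨x, hx⟩ := exists_pt ω hω
  have hs : IsState ω := hω.1
  let φ : A →ₗ[ℂ] ℂ :=
    { toFun := fun a => ω (.const X a)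
      map_add' := fun a b => by rw [← map_add]; rfl
      map_smul' := fun c a => by rw [RingHom.id_apply, ← map_smul]; rfl }
  have hφ : ∀ f : C(X, A), ω f = φ (f x) := fun f => by
    have := vanish ω hω x hx (f - .const X (f x)) (by simp)
    rw [map_sub, sub_eq_zero] at this
    exact this
  refine ⟨x, φ, ⟨⟨hs.1, fun a => hs.2 (.const X a)⟩, ?_⟩, hφ⟩
  rintro φ₁ h₁ φ₂ h₂ ⟨a, b, ha, hb, hab, he⟩
  have := hω.2 (comp_state x φ₁ h₁) (comp_state x φ₂ h₂) ⟨a, b, ha, hb, hab, by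
    ext f
    rw [hφ, ← he]
    rfl⟩
  ext c
  exact LinearMap.congr_fun this (.const X c)
end

section
/- Let X be a nonempty compact Hausdorff topological space and A a nontrivial unital C*-algebra over ℂ, and let C(X, A) denote the unital C*-algebra of continuous functions from X to A with pointwise operations and supremum norm. Then every state ω on C(X, A) lies in the weak*-closure of the convex hull of the set of product states { f ↦ φ(f(x)) : x ∈ X, φ a state on A }. -/
open Topology in
lemma aux_cs {B : Type*} [Ring B] [StarRing B] [Algebra ℂ B] [StarModule ℂ B]
    (ω : B →ₗ[ℂ] ℂ) (h : ∀ f : B, 0 ≤ (ω (star f * f)).re ∧ (ω (star f * f)).im = 0)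
    (p q : B) (hp : ω (star p * p) = 0) : ω (star p * q) = 0 := by
  have key : ∀ c : ℂ, ω (star (q + c • p) * (q + c • p)) =
      ω (star q * q) + c * ω (star q * p) + star c * ω (star p * q) := by
    intro c
    simp only [star_add, star_smul, add_mul, mul_add, smul_mul_assoc, mul_smul_comm, map_add,
      map_smul, hp, smul_eq_mul, mul_zero]
    ring
  set α := ω (star q * p)
  set β := ω (star p * q)
  have lin : ∀ a b : ℝ, (∀ s : ℝ, 0 ≤ a + s * b) → b = 0 := by
    intro a b hs
    by_contra hb
    have := hs (-(a + 1) / b)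
    rw [div_mul_cancel₀ _ hb] at this
    linarith
  have k1 : ∀ s : ℝ, 0 ≤ (ω (star q * q)).re + s * (α.re + β.re) ∧ s * (α.im + β.im) = 0 := by
    intro s
    have := h (q + (s : ℂ) • p)
    rw [key] at this
    have h0 := (h q).2
    simp [h0] at this
    constructor
    · linarith [this.1]
    · linarith [this.2]
  have k2 : ∀ s : ℝ, 0 ≤ (ω (star q * q)).re + s * (β.im - α.im) ∧ s * (α.re - β.re) = 0 := by
    intro s
    have := h (q + ((s : ℂ) * Complex.I) • p)
    rw [key] at this
    have h0 := (h q).2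
    simp [h0] at this
    constructor
    · linarith [this.1]
    · linarith [this.2]
  have e1 := lin _ _ (fun s => (k1 s).1)
  have e2 := (k1 1).2
  have e3 := lin _ _ (fun s => (k2 s).1)
  have e4 := (k2 1).2
  apply Complex.ext
  · simp; linarith
  · simp; linarith

section aux
variable {X : Type*} [TopologicalSpace X] [CompactSpace X]
    {A : Type*} [CStarAlgebra A]

/-- scalar function times unit -/
noncomputable def auxM (A : Type*) [CStarAlgebra A] (r : C(X, ℝ)) : C(X, A) :=
  ⟨fun x => (r x : ℂ) • (1 : A), by fun_prop⟩

/-- constant function at the value at `x` -/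
noncomputable def auxE (A : Type*) [CStarAlgebra A] (x : X) : C(X, A) →L[ℂ] C(X, A) :=
  LinearMap.mkContinuous
    { toFun := fun f => ContinuousMap.const X (f x)
      map_add' := fun f g => by ext; simp
      map_smul' := fun c f => by ext; simp } 1 (by
    intro f
    rw [one_mul]
    refine (ContinuousMap.norm_le _ (norm_nonneg _)).2 fun y => ?_
    exact f.norm_coe_le_norm x)

noncomputable def auxP (ω : C(X, A) →L[ℂ] ℂ) (r : C(X, ℝ)) (x : X) : C(X, A) →L[ℂ] ℂ :=
  ω ∘L (ContinuousLinearMap.mul ℂ C(X, A) (auxM A r)) ∘L auxE A x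

lemma auxP_apply (ω : C(X, A) →L[ℂ] ℂ) (r : C(X, ℝ)) (x : X) (f : C(X, A)) :
    auxP ω r x f = ω (auxM A r * ContinuousMap.const X (f x)) := rfl

lemma aux_sq (r : C(X, ℝ)) (hr : ∀ x, 0 ≤ r x) :
    ∃ s : C(X, ℝ), ∀ a : A, auxM A r * ContinuousMap.const X (star a * a) =
      star (auxM A s * ContinuousMap.const X a) * (auxM A s * ContinuousMap.const X a) ∧
      auxM A r * ContinuousMap.const X a =
      star (auxM A s) * (auxM A s * ContinuousMap.const X a) := by
  refine ⟨⟨fun x => Real.sqrt (r x), by fun_prop⟩, fun a => ?_⟩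
  constructor
  · ext x
    simp [auxM, smul_smul, Real.mul_self_sqrt (hr x)]
  · ext x
    simp [auxM, smul_smul, Real.mul_self_sqrt (hr x)]

lemma aux_state (ω : C(X, A) →L[ℂ] ℂ)
    (hω : ∀ f : C(X, A), 0 ≤ (ω (star f * f)).re ∧ (ω (star f * f)).im = 0)
    (r : C(X, ℝ)) (hr : ∀ x, 0 ≤ r x) :
    (0 ≤ (ω (auxM A r)).re ∧ (ω (auxM A r)).im = 0) ∧
    (ω (auxM A r) = 0 → ∀ a, ω (auxM A r * ContinuousMap.const X a) = 0) ∧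
    (ω (auxM A r) ≠ 0 → ∃ φ : A →ₗ[ℂ] ℂ, IsState φ ∧ ∀ a,
      (((ω (auxM A r)).re⁻¹ : ℝ) : ℂ) * ω (auxM A r * ContinuousMap.const X a) = φ a) := by
  obtain ⟨s, hs⟩ := aux_sq (A := A) r hr
  have h1 : auxM A r * ContinuousMap.const X (1 : A) = auxM A r := by ext; simp
  have h1' : auxM A s * ContinuousMap.const X (1 : A) = auxM A s := by ext; simp
  have h2 : auxM A r = star (auxM A s) * auxM A s := by
    have := (hs 1).2
    rwa [h1, h1'] at this
  have hw : 0 ≤ (ω (auxM A r)).re ∧ (ω (auxM A r)).im = 0 := by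
    rw [h2]; exact hω _
  refine ⟨hw, fun h0 a => ?_, fun hne => ?_⟩
  · rw [(hs a).2]
    rw [h2] at h0
    exact aux_cs (ω : C(X, A) →ₗ[ℂ] ℂ) hω _ _ h0
  · have hre : ((ω (auxM A r)).re : ℂ) = ω (auxM A r) := by
      apply Complex.ext <;> simp [hw.2]
    refine ⟨{ toFun := fun a => (((ω (auxM A r)).re⁻¹ : ℝ) : ℂ) *
                ω (auxM A r * ContinuousMap.const X a)
              map_add' := ?_
              map_smul' := ?_ }, ⟨?_, ?_⟩, fun a => rfl⟩
    · intro a b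
      have : ContinuousMap.const X (a + b) = ContinuousMap.const X a + ContinuousMap.const X b := by
        ext; simp
      rw [this, mul_add, map_add, mul_add]
    · intro c a
      have : ContinuousMap.const X (c • a) = c • ContinuousMap.const X a := by
        ext; simp
      rw [this, mul_smul_comm, map_smul]
      simp only [smul_eq_mul, RingHom.id_apply]
      ring
    · change _ * ω (auxM A r * ContinuousMap.const X (1 : A)) = 1
      rw [h1, Complex.ofReal_inv, hre, inv_mul_cancel₀ hne]
    · intro a
      change 0 ≤ (_ * ω (auxM A r * ContinuousMap.const X (star a * a))).re ∧
        (_ * ω (auxM A r * ContinuousMap.const X (star a * a))).im = 0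
      rw [(hs a).1, Complex.re_ofReal_mul, Complex.im_ofReal_mul, (hω _).2]
      exact ⟨mul_nonneg (inv_nonneg.2 hw.1) (hω _).1, mul_zero _⟩

lemma aux_approx [T2Space X] (ω : C(X, A) →L[ℂ] ℂ) (h1 : ω 1 = 1) (F : Finset C(X, A)) (ε : ℝ)
    (hε : 0 < ε) :
    ∃ (t : Finset X) (ρ : t → C(X, ℝ)), (∀ i x, 0 ≤ ρ i x) ∧
      ∑ i, ω (auxM A (ρ i)) = 1 ∧
      ∀ f ∈ F, ‖∑ i, auxP ω (ρ i) i f - ω f‖ < ε := by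
  set δ : ℝ := ε / (‖ω‖ + 1) with hδ
  have hω0 := norm_nonneg ω
  have hδ0 : 0 < δ := by positivity
  let U : X → Set X := fun x => ⋂ f ∈ F, {y | ‖f y - f x‖ < δ}
  have hUo : ∀ x, IsOpen (U x) := fun x => by
    refine isOpen_biInter_finset fun f _ => ?_
    exact isOpen_lt (by fun_prop) continuous_const
  have hUx : ∀ x, x ∈ U x := fun x => by simp [U, hδ0]
  obtain ⟨t, ht⟩ := isCompact_univ.elim_finite_subcover U hUo
    (fun x _ => Set.mem_iUnion.2 ⟨x, hUx x⟩)
  obtain ⟨ρ, hρ⟩ := PartitionOfUnity.exists_isSubordinate (ι := t) (s := Set.univ) isClosed_univ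
    (fun i => U i) (fun i => hUo i) (by
      intro x hx
      simpa using ht hx)
  have hsum : ∀ x, ∑ i, ρ i x = 1 := by
    intro x
    have := ρ.sum_eq_one (Set.mem_univ x)
    rwa [finsum_eq_sum_of_fintype] at this
  have hsumC : ∀ x, ∑ i, ((ρ i x : ℝ) : ℂ) = 1 := by
    intro x
    rw [← Complex.ofReal_sum, hsum, Complex.ofReal_one]
  refine ⟨t, fun i => ρ i, fun i x => ρ.nonneg i x, ?_, ?_⟩
  · rw [← map_sum]
    have : ∑ i, auxM A (ρ i) = 1 := by
      ext x
      simp only [auxM, ContinuousMap.sum_apply, ContinuousMap.coe_mk, ← Finset.sum_smul, hsumC,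
        one_smul, ContinuousMap.one_apply]
    rw [this, h1]
  · intro f hf
    simp only [auxP_apply]
    rw [← map_sum, ← map_sub]
    have hb : ‖∑ i, auxM A (ρ i) * ContinuousMap.const X (f i) - f‖ ≤ δ := by
      refine (ContinuousMap.norm_le _ hδ0.le).2 fun x => ?_
      have e : (∑ i, auxM A (ρ i) * ContinuousMap.const X (f i) - f) x
          = ∑ i : t, ((ρ i x : ℝ) : ℂ) • (f i - f x) := by
        simp only [auxM, ContinuousMap.sub_apply, ContinuousMap.sum_apply, ContinuousMap.mul_apply,
          ContinuousMap.coe_mk, ContinuousMap.const_apply, smul_mul_assoc, one_mul, smul_sub,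
          Finset.sum_sub_distrib, ← Finset.sum_smul, hsumC, one_smul]
      rw [e]
      calc _ ≤ ∑ i : t, ρ i x * δ := by
            refine norm_sum_le_of_le _ fun i _ => ?_
            rw [norm_smul, Complex.norm_real, Real.norm_of_nonneg (ρ.nonneg i x)]
            by_cases h0 : ρ i x = 0
            · simp [h0]
            · have hx : x ∈ U i := hρ i (subset_tsupport _ h0)
              have : ‖f x - f i‖ < δ := by
                simp only [U, Set.mem_iInter] at hx
                exact hx f hf
              rw [norm_sub_rev] at this
              exact mul_le_mul_of_nonneg_left this.le (ρ.nonneg i x)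
        _ = δ := by rw [← Finset.sum_mul, hsum, one_mul]
    calc _ ≤ ‖ω‖ * δ := (ω.le_opNorm _).trans (mul_le_mul_of_nonneg_left hb hω0)
      _ < (‖ω‖ + 1) * δ := by nlinarith
      _ = ε := by rw [hδ]; field_simp

end aux

lemma aux_closure {E : Type*} [AddCommGroup E] [TopologicalSpace E] [Module ℂ E]
    (S : Set (WeakDual ℂ E)) (ω : WeakDual ℂ E)
    (h : ∀ (F : Finset E) (ε : ℝ), 0 < ε → ∃ η ∈ S, ∀ f ∈ F, ‖η f - ω f‖ < ε) :
    ω ∈ closure S := by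
  have hi : Topology.IsInducing (fun (η : WeakDual ℂ E) (f : E) => η f) := ⟨rfl⟩
  rw [hi.closure_eq_preimage_closure_image, Set.mem_preimage, mem_closure_iff_nhds]
  intro V hV
  rw [nhds_pi, Filter.mem_pi] at hV
  obtain ⟨I, hI, W, hW, hWV⟩ := hV
  have : ∀ f, ∃ ε > 0, Metric.ball (ω f) ε ⊆ W f := fun f => Metric.mem_nhds_iff.1 (hW f)
  choose e he heW using this
  obtain ⟨ε, hε, hle⟩ : ∃ ε > 0, ∀ f ∈ hI.toFinset, ε ≤ e f := by
    by_cases hn : hI.toFinset.Nonempty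
    · obtain ⟨f, hf, hm⟩ := hI.toFinset.exists_min_image e hn
      exact ⟨e f, he f, hm⟩
    · rw [Finset.not_nonempty_iff_eq_empty] at hn
      exact ⟨1, one_pos, by simp [hn]⟩
  obtain ⟨η, hη, hηf⟩ := h hI.toFinset ε hε
  refine ⟨_, hWV ?_, ⟨η, hη, rfl⟩⟩
  intro f hf
  apply heW f
  rw [mem_ball_iff_norm]
  have hf' : f ∈ hI.toFinset := by simpa using hf
  exact (hηf f hf').trans_le (hle f hf')

/-- On the separated composite system `C(X, A) ≅ C(X) ⊗ A` (first factor
commutative), every state is decomposable into product states: it lies in the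
weak*-closure of the convex hull of the product states `f ↦ φ (f x)`. -/
theorem state_of_continuousMap_decomposable_into_product_states
    (X : Type*) [TopologicalSpace X] [CompactSpace X] [T2Space X] [Nonempty X]
    (A : Type*) [CStarAlgebra A] [Nontrivial A]
    (ω : WeakDual ℂ C(X, A))
    (hω : ω 1 = 1 ∧ ∀ f : C(X, A), 0 ≤ (ω (star f * f)).re ∧ (ω (star f * f)).im = 0) :
    ω ∈ closure (convexHull ℝ
      {ω' : WeakDual ℂ C(X, A) | ∃ (x : X) (φ : A →ₗ[ℂ] ℂ),
        IsState φ ∧ ∀ f : C(X, A), ω' f = φ (f x)}) := by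
  classical
  apply aux_closure
  intro F ε hε
  let ω₀ : C(X, A) →L[ℂ] ℂ := WeakDual.toStrongDual ω
  obtain ⟨h1, hp⟩ := hω
  obtain ⟨t, ρ, hρ, hs, hF⟩ := aux_approx ω₀ h1 F ε hε
  have hst := fun i => aux_state ω₀ hp (ρ i) (hρ i)
  let w : t → ℝ := fun i => (ω₀ (auxM A (ρ i))).re
  have hw : ∀ i, ((w i : ℝ) : ℂ) = ω₀ (auxM A (ρ i)) := fun i => by
    apply Complex.ext <;> simp [w, (hst i).1.2]
  let z : t → WeakDual ℂ C(X, A) := fun i =>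
    StrongDual.toWeakDual ((((w i)⁻¹ : ℝ) : ℂ) • auxP ω₀ (ρ i) i)
  have hz : ∀ i f, z i f = (((w i)⁻¹ : ℝ) : ℂ) * auxP ω₀ (ρ i) i f := fun i f => rfl
  refine ⟨∑ i ∈ Finset.univ.filter (fun i => w i ≠ 0), w i • z i, ?_, ?_⟩
  · refine (convex_convexHull ℝ _).sum_mem (fun i _ => (hst i).1.1) ?_ ?_
    · rw [Finset.sum_filter_ne_zero]
      have : ((∑ i, w i : ℝ) : ℂ) = 1 := by
        rw [Complex.ofReal_sum, ← hs]
        exact Finset.sum_congr rfl fun i _ => hw i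
      exact_mod_cast this
    · intro i hi
      apply subset_convexHull
      have hi' : w i ≠ 0 := (Finset.mem_filter.1 hi).2
      have hne : ω₀ (auxM A (ρ i)) ≠ 0 := by
        rw [← hw]; exact_mod_cast hi'
      obtain ⟨φ, hφ, hφa⟩ := (hst i).2.2 hne
      exact ⟨i, φ, hφ, fun f => hφa (f i)⟩
  · intro f hf
    have e : (∑ i ∈ Finset.univ.filter (fun i => w i ≠ 0), w i • z i) f
        = ∑ i, auxP ω₀ (ρ i) i f := by
      have e1 : (∑ i ∈ Finset.univ.filter (fun i => w i ≠ 0), w i • z i) f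
        = ∑ i ∈ Finset.univ.filter (fun i => w i ≠ 0), (w i • z i) f :=
        map_sum (AddMonoidHom.mk' (fun η : WeakDual ℂ C(X, A) => η f) (fun _ _ => rfl)) _ _
      rw [e1, Finset.sum_filter]
      refine Finset.sum_congr rfl fun i _ => ?_
      split_ifs with h
      · have : (w i • z i) f = ((w i : ℝ) : ℂ) * z i f := by
          rw [← Complex.real_smul]; rfl
        rw [this, hz, ← mul_assoc, ← Complex.ofReal_mul, mul_inv_cancel₀ h, Complex.ofReal_one,
          one_mul]
      · rw [auxP_apply, (hst i).2.1]
        rw [← hw, not_not.1 h, Complex.ofReal_zero]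
    rw [e]
    exact hF f hf
end

section
/- Let A be a commutative unital C*-algebra over ℂ, let H be a nontrivial complex Hilbert space, and let π : A → B(H) be a unital star-algebra homomorphism into the bounded linear operators on H that is topologically irreducible, i.e. the only closed subspaces of H invariant under every operator π(a), a ∈ A, are {0} and H. Then H is one-dimensional (finrank ℂ H = 1). -/
theorem scalar_aux
    (A : Type*) [CommCStarAlgebra A]
    (H : Type*) [NormedAddCommGroup H] [InnerProductSpace ℂ H] [CompleteSpace H]
    [Nontrivial H]
    (π : A →⋆ₐ[ℂ] (H →L[ℂ] H))
    (hirr : ∀ K : Submodule ℂ H, IsClosed (K : Set H) →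
      (∀ a : A, ∀ x ∈ K, π a x ∈ K) → K = ⊥ ∨ K = ⊤) (a : A) :
    ∃ l : ℂ, π a = algebraMap ℂ (H →L[ℂ] H) l := by
  have hcomm : ∀ b c : A, Commute (π b) (π c) := fun b c => (Commute.all b c).map π
  have hn : IsStarNormal (π a) := ⟨by rw [← map_star]; exact hcomm _ _⟩
  have key : ∀ S R : H →L[ℂ] H, (∀ b, Commute S (π b)) → S * R = 0 → S = 0 ∨ R = 0 := by
    intro S R hS hSR
    rcases hirr (LinearMap.ker S.toLinearMap) S.isClosed_ker (by
      intro b x hx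
      have h1 : S (π b x) = π b (S x) := congrArg (fun T : H →L[ℂ] H => T x) (hS b).eq
      have hx' : S x = 0 := hx
      change S (π b x) = 0
      rw [h1, hx', map_zero]) with h | h
    · right
      ext x
      have h2 : S (R x) = 0 := congrArg (fun T : H →L[ℂ] H => T x) hSR
      have : R x ∈ LinearMap.ker S.toLinearMap := h2
      rw [h] at this
      simpa using this
    · left
      ext x
      have : x ∈ LinearMap.ker S.toLinearMap := h ▸ Submodule.mem_top
      exact this
  obtain ⟨l, hl⟩ := spectrum.nonempty (π a)
  have hsub : ∀ y ∈ spectrum ℂ (π a), y = l := by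
    intro y hy
    by_contra hne
    have hd : 0 < dist y l := dist_pos.2 hne
    let F : ℂ → ℂ → ℂ := fun w z => ((max (dist y l / 2 - dist z w) 0 : ℝ) : ℂ)
    have hF : ∀ w, Continuous (F w) := fun w => by
      simp only [F]; fun_prop
    have hnz : ∀ w ∈ spectrum ℂ (π a), cfc (F w) (π a) ≠ 0 := by
      intro w hw h0
      have h1 : F w w ∈ spectrum ℂ (cfc (F w) (π a)) := by
        rw [cfc_map_spectrum (F w) (π a) hn (hF w).continuousOn]
        exact ⟨w, hw, rfl⟩
      rw [h0, spectrum.zero_eq] at h1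
      have h2 : max (dist y l / 2 - dist w w) 0 = 0 := by
        exact Complex.ofReal_eq_zero.1 (Set.mem_singleton_iff.1 h1)
      rw [dist_self, sub_zero, max_eq_left (by positivity)] at h2
      linarith
    have hprod : cfc (F y) (π a) * cfc (F l) (π a) = 0 := by
      rw [← cfc_mul (F y) (F l) (π a) (hF y).continuousOn (hF l).continuousOn]
      rw [← cfc_zero (R := ℂ) (a := π a)]
      congr 1
      ext1 z
      simp only [F, Pi.zero_apply, mul_eq_zero, Complex.ofReal_eq_zero]
      have := dist_triangle_left y l z
      by_cases h : dist y l / 2 ≤ dist z y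
      · left; exact max_eq_right (by linarith)
      · right; exact max_eq_right (by linarith)
    rcases key _ _ (fun b => Commute.cfc (hcomm a b)
      (by rw [← map_star]; exact hcomm _ _) _) hprod with h | h
    · exact hnz y hy h
    · exact hnz l hl h
  refine ⟨l, ?_⟩
  rw [← cfc_const l (π a), ← cfc_id ℂ (π a)]
  conv_rhs => rw [cfc_id ℂ (π a)]
  exact cfc_congr fun y hy => hsub y hy


/-- An irreducible representation of a commutative unital C*-algebra on a
nontrivial complex Hilbert space forces the Hilbert space to be
one-dimensional. -/
theorem irreducible_representation_of_commutative_is_one_dimensional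
    (A : Type*) [CommCStarAlgebra A]
    (H : Type*) [NormedAddCommGroup H] [InnerProductSpace ℂ H] [CompleteSpace H]
    [Nontrivial H]
    (π : A →⋆ₐ[ℂ] (H →L[ℂ] H))
    (hirr : ∀ K : Submodule ℂ H, IsClosed (K : Set H) →
      (∀ a : A, ∀ x ∈ K, π a x ∈ K) → K = ⊥ ∨ K = ⊤) :
    Module.finrank ℂ H = 1 := by
  obtain ⟨x, hx⟩ := exists_ne (0 : H)
  rw [finrank_eq_one_iff_of_nonzero x hx]
  rcases hirr (Submodule.span ℂ {x}) (Submodule.closed_of_finiteDimensional _) (by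
    intro a z hz
    obtain ⟨l, hl⟩ := scalar_aux A H π hirr a
    rw [hl, Algebra.algebraMap_eq_smul_one]
    exact Submodule.smul_mem _ l hz) with h | h
  · exact absurd (Submodule.span_singleton_eq_bot.1 h) hx
  · exact h
end
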